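/- Let β > 0 and let φ_β : ℝ → ℝ be the hyperbolic entropy φ_β(θ) := θ·arsinh(θ/β) − √(θ² + β²). Then the Fenchel conjugate of φ_β is φ_β*(x) = β·cosh(x), i.e., for every x ∈ ℝ, sup_{y ∈ ℝ} { x·y − φ_β(y) } = β·cosh(x). -/

import Mathlib

/-- The hyperbolic entropy with parameter `β > 0`. -/
noncomputable def hypEnt (β θ : ℝ) : ℝ :=
  θ * Real.arsinh (θ / β) - Real.sqrt (θ ^ 2 + β ^ 2)

/-! In the coordinate `y = β sinh t = (β cosh)'(t)` the hyperbolic entropy is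
`φ_β(y) = t y - β cosh t`, the Legendre transform of the convex function `β cosh`. Hence
`x y - φ_β(y) = β cosh t + (x - t) β sinh t` is the value at `x` of the tangent line to `β cosh`
at `t`: it is at most `β cosh x`, with equality at `t = x`. -/

open Set Function

lemma add_mul_sub_le_of_convexOn {s : Set ℝ} {f : ℝ → ℝ} {f' t x : ℝ} (hf : ConvexOn ℝ s f)
    (ht : t ∈ s) (hx : x ∈ s) (hf' : HasDerivWithinAt f f' s t) :
    f t + f' * (x - t) ≤ f x := by
  rcases lt_trichotomy t x with htx | rfl | hxt
  · have le_slope : f' ≤ (f x - f t) / (x - t) := by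
      simpa only [slope_def_field] using hf.le_slope_of_hasDerivWithinAt ht hx htx hf'
    linarith [(le_div_iff₀ (sub_pos.2 htx)).1 le_slope]
  · simp
  · have slope_le : (f t - f x) / (t - x) ≤ f' := by
      simpa only [slope_def_field] using hf.slope_le_of_hasDerivWithinAt hx ht hxt hf'
    linarith [(div_le_iff₀ (sub_pos.2 hxt)).1 slope_le]

lemma isGreatest_range_mul_sub_of_legendre {f f' φ : ℝ → ℝ} (hf : ConvexOn ℝ univ f)
    (hf' : ∀ t, HasDerivAt f (f' t) t) (hsurj : Surjective f')
    (hφ : ∀ t, φ (f' t) = t * f' t - f t) (x : ℝ) :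
    IsGreatest (range fun y ↦ x * y - φ y) (f x) := by
  have eq_tangent (t : ℝ) : x * f' t - φ (f' t) = f t + f' t * (x - t) := by
    rw [hφ]
    ring
  constructor
  · exact ⟨f' x, by simp only [eq_tangent, sub_self, mul_zero, add_zero]⟩
  · rintro _ ⟨y, rfl⟩
    obtain ⟨t, rfl⟩ := hsurj y
    exact (eq_tangent t).trans_le <| add_mul_sub_le_of_convexOn hf (mem_univ t) (mem_univ x)
      (hf' t).hasDerivWithinAt

lemma convexOn_cosh : ConvexOn ℝ univ Real.cosh :=
  Monotone.convexOn_univ_of_deriv Real.differentiable_cosh <| by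
    rw [Real.deriv_cosh]
    exact Real.sinh_strictMono.monotone

lemma sqrt_mul_sinh_sq_add_sq {β : ℝ} (hβ : 0 ≤ β) (t : ℝ) :
    √((β * Real.sinh t) ^ 2 + β ^ 2) = β * Real.cosh t := by
  have sq_eq : (β * Real.sinh t) ^ 2 + β ^ 2 = (β * Real.cosh t) ^ 2 := by
    rw [mul_pow β (Real.cosh t), Real.cosh_sq]
    ring
  rw [sq_eq, Real.sqrt_sq (mul_nonneg hβ (Real.cosh_pos t).le)]

lemma hypEnt_mul_sinh {β : ℝ} (hβ : 0 < β) (t : ℝ) :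
    hypEnt β (β * Real.sinh t) = t * (β * Real.sinh t) - β * Real.cosh t := by
  rw [hypEnt, sqrt_mul_sinh_sq_add_sq hβ.le, mul_div_cancel_left₀ _ hβ.ne', Real.arsinh_sinh,
    mul_comm t]

lemma isGreatest_range_mul_sub_hypEnt {β : ℝ} (hβ : 0 < β) (x : ℝ) :
    IsGreatest (range fun y ↦ x * y - hypEnt β y) (β * Real.cosh x) :=
  isGreatest_range_mul_sub_of_legendre (f := fun t ↦ β * Real.cosh t)
    (convexOn_cosh.smul hβ.le)
    (fun t ↦ (Real.hasDerivAt_cosh t).const_mul β)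
    ((mul_left_surjective₀ hβ.ne').comp Real.sinh_surjective)
    (hypEnt_mul_sinh hβ) x

/-- The Fenchel conjugate of the hyperbolic entropy `φ_β` is `x ↦ β·cosh x`. -/
theorem stmt16 (β : ℝ) (hβ : 0 < β) :
    ∀ x : ℝ, (⨆ y : ℝ, (x * y - hypEnt β y)) = β * Real.cosh x :=
  fun x ↦ (isGreatest_range_mul_sub_hypEnt hβ x).csSup_eq
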